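/- Let Y_n ⊂ ℝ² be a Π_n-poised set and suppose there exist linearly independent polynomials h_0, …, h_{n+1} ∈ Π_{n+1} ∩ I(Y_n) that admit a linear syzygy matrix Σ(x) ∈ Π_1^{(n+1)×(n+2)} of rank n + 1 having one column of the form k(x)·v for some v ∈ ℝ^{n+1} and some nonconstant k ∈ Π_1. Then K = V(k) is a maximal line for Y_n, i.e., #(K ∩ Y_n) = n + 1. -/

import Mathlib

open MvPolynomial

noncomputable section

abbrev Pt : Type := Fin 2 → ℝ
abbrev BPoly : Type := MvPolynomial (Fin 2) ℝ

/-- `Π_n`: the space of bivariate polynomials of total degree at most `n`. -/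
def PiLE (n : ℕ) : Submodule ℝ BPoly := MvPolynomial.restrictTotalDegree (Fin 2) ℝ n

/-- The vanishing ideal `I(Y)` of a set `Y ⊆ ℝ²`. -/
def vIdeal (Y : Set Pt) : Ideal BPoly where
  carrier := {p | ∀ y ∈ Y, eval y p = 0}
  add_mem' := by
    intro a b ha hb y hy
    simp [map_add, ha y hy, hb y hy]
  zero_mem' := by intro y hy; simp
  smul_mem' := by
    intro c a ha y hy
    simp [smul_eq_mul, ha y hy]

/-- `I(Y)` as an `ℝ`-subspace of `Π`. -/
def vSub (Y : Set Pt) : Submodule ℝ BPoly := (vIdeal Y).restrictScalars ℝ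

/-- `Y` is `Π_n`-poised: every interpolation problem on `Y` has a unique solution in `Π_n`. -/
def Poised (n : ℕ) (Y : Finset Pt) : Prop :=
  ∀ f : Pt → ℝ, ∃! p : BPoly, p ∈ PiLE n ∧ ∀ y ∈ Y, eval y p = f y

/-- `Y` is `Π_n`-independent: every interpolation problem on `Y` has a solution in `Π_n`. -/
def PIndep (n : ℕ) (Y : Finset Pt) : Prop :=
  ∀ f : Pt → ℝ, ∃ p ∈ PiLE n, ∀ y ∈ Y, eval y p = f y

/-- `ℓ y` is the fundamental (Lagrange) polynomial of `y ∈ Y` in `Π_n`. -/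
def IsFundamental (n : ℕ) (Y : Finset Pt) (ℓ : Pt → BPoly) : Prop :=
  ∀ y ∈ Y, ℓ y ∈ PiLE n ∧ ∀ y' ∈ Y, eval y' (ℓ y) = if y' = y then 1 else 0

/-- A finite family is an H-basis of the ideal `I`. -/
def IsHBasisFam {ι : Type} [Fintype ι] (I : Ideal BPoly) (h : ι → BPoly) : Prop :=
  (∀ i, h i ∈ I) ∧ ∀ f ∈ I, ∃ g : ι → BPoly,
    (∀ i, (g i).totalDegree ≤ f.totalDegree - (h i).totalDegree) ∧ f = ∑ i, g i * h i

/-- A finite set is an H-basis of the ideal `I`. -/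
def IsHBasisSet (I : Ideal BPoly) (H : Finset BPoly) : Prop :=
  (∀ p ∈ H, p ∈ I) ∧ ∀ f ∈ I, ∃ g : BPoly → BPoly,
    (∀ p ∈ H, (g p).totalDegree ≤ f.totalDegree - p.totalDegree) ∧ f = ∑ p ∈ H, g p * p

/-- `M` is a linear syzygy matrix for the family `h`. -/
def IsLinSyz (n : ℕ) (h : Fin (n + 2) → BPoly)
    (M : Matrix (Fin (n + 1)) (Fin (n + 2)) BPoly) : Prop :=
  (∀ i j, M i j ∈ PiLE 1) ∧ ∀ i, ∑ j, M i j * h j = 0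

/-- The rank of a polynomial matrix over the field of rational functions. -/
def ratRank {a b : ℕ} (M : Matrix (Fin a) (Fin b) BPoly) : ℕ :=
  (M.map (algebraMap BPoly (FractionRing BPoly))).rank

/-!
Delete the column `k v` from the syzygy matrix to get a square matrix `A`, and write `f` for the
family `h` without `h_j`; then `A f = -(k h_j) v`. The rank condition gives `det A ≠ 0`, so Cramer's
rule reads `(det A) f = -(k h_j) m` with `m = adj(A) v` of degree at most `n`. Cancelling the
common factor of `det A` and `k h_j` yields `f = g q` with `g ∣ k h_j` and `deg q_i ≤ n`.

Poisedness forces every nonzero element of `Π_{n+1} ∩ I(Y)` to have degree exactly `n + 1`, so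
linearly independent elements have linearly independent leading forms. Counting forms of degree
`n + 1 - deg g` gives `deg g = 1` and `g ∤ h_j`, so `g ∣ k` because `g` is prime. Now the `n + 1`
independent polynomials `q_i ∈ Π_n` vanish on `Y` off the line `K = V(k)`, so `K` contains at
least `n + 1` points of `Y`. Conversely no nonzero element of `k Π_{n-1}` vanishes on all of
`Y \ K`, so `Y` has at least `dim Π_{n-1}` points off `K`, leaving at most
`dim Π_n - dim Π_{n-1} = n + 1` on `K`.
-/

open Module Finset

section Algebra

variable {R : Type*} [CommRing R]

lemma exists_eq_mul_and_eq_mul_of_mul_eq_mul [UniqueFactorizationMonoid R] {ι : Type*} {a b : R}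
    (ha : a ≠ 0) {f m : ι → R} (hfm : ∀ i, a * f i = b * m i) :
    ∃ (g r : R) (q : ι → R), g ∣ b ∧ r ≠ 0 ∧ (∀ i, f i = g * q i) ∧ ∀ i, m i = r * q i := by
  obtain ⟨r, g, c, hrel, rfl, rfl⟩ := UniqueFactorizationMonoid.exists_reduced_factors a ha b
  obtain ⟨hc, hr⟩ := mul_ne_zero_iff.1 ha
  have hfm' (i) : r * f i = g * m i := mul_left_cancel₀ hc (by linear_combination hfm i)
  choose q hq using fun i ↦ hrel.dvd_of_dvd_mul_left (Dvd.intro _ (hfm' i))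
  refine ⟨g, r, q, Dvd.intro_left _ rfl, hr, fun i ↦ mul_left_cancel₀ hr ?_, hq⟩
  linear_combination hfm' i + g * hq i

variable [IsDomain R]

lemma linearIndependent_row_of_rank_map_eq_card {m n : Type*} [Fintype m] [Fintype n]
    {M : Matrix m n R}
    (hM : (M.map (algebraMap R (FractionRing R))).rank = Fintype.card m) :
    LinearIndependent R M.row := by
  have hmap : LinearIndependent (FractionRing R) (M.map (algebraMap R (FractionRing R))).row := by
    rw [linearIndependent_iff_card_eq_finrank_span, ← hM, Set.finrank,
      Matrix.rank_eq_finrank_span_row]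
  rw [← LinearIndependent.iff_fractionRing (R := R)] at hmap
  exact .of_comp ((Algebra.linearMap R (FractionRing R)).compLeft n) hmap

lemma det_submatrix_succAbove_ne_zero {n : ℕ} {M : Matrix (Fin n) (Fin (n + 1)) R}
    (hM : LinearIndependent R M.row) {h : Fin (n + 1) → R} (hMh : M.mulVec h = 0)
    {j : Fin (n + 1)} (hj : h j ≠ 0) : (M.submatrix id j.succAbove).det ≠ 0 := by
  intro hdet
  obtain ⟨w, hw, hwA⟩ := Matrix.exists_vecMul_eq_zero_iff.2 hdet
  have hother (l) : Matrix.vecMul w M (j.succAbove l) = 0 := congrFun hwA l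
  have hself : Matrix.vecMul w M j = 0 := by
    have hwMh : dotProduct (Matrix.vecMul w M) h = 0 := by
      rw [← Matrix.dotProduct_mulVec, hMh, dotProduct_zero]
    simpa [dotProduct, Fin.sum_univ_succAbove _ j, hother, hj] using hwMh
  have hwM : Matrix.vecMul w M = 0 :=
    funext ((Fin.forall_iff_succAbove j).2 ⟨hself, hother⟩)
  exact hw (Matrix.vecMul_injective_iff.2 hM (hwM.trans (Matrix.zero_vecMul M).symm))

end Algebra

section Degree

variable {σ R : Type*} [CommRing R]

lemma totalDegree_det_le {ι : Type*} [Fintype ι] [DecidableEq ι]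
    {A : Matrix ι ι (MvPolynomial σ R)} {d : ι → ℕ} (hA : ∀ i j, (A i j).totalDegree ≤ d j) :
    A.det.totalDegree ≤ ∑ j, d j := by
  rw [Matrix.det_apply]
  refine totalDegree_finsetSum_le fun τ _ ↦ (totalDegree_smul_le _ _).trans ?_
  exact (totalDegree_finsetProd _ _).trans (sum_le_sum fun j _ ↦ hA _ _)

lemma totalDegree_cramer_C_le {n d : ℕ}
    {A : Matrix (Fin (n + 1)) (Fin (n + 1)) (MvPolynomial σ R)}
    (hA : ∀ i j, (A i j).totalDegree ≤ d) (v : Fin (n + 1) → R) (i : Fin (n + 1)) :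
    (A.cramer (fun l ↦ C (v l)) i).totalDegree ≤ n * d := by
  rw [Matrix.cramer_apply]
  refine (totalDegree_det_le (d := Function.update (fun _ ↦ d) i 0) fun l j ↦ ?_).trans ?_
  · rcases eq_or_ne j i with rfl | hji
    · simp
    · simpa [hji] using hA l j
  · simp [Fin.sum_univ_succAbove _ i]

lemma totalDegree_le_mul_left [IsDomain R] {r q : MvPolynomial σ R} (hr : r ≠ 0) :
    q.totalDegree ≤ (r * q).totalDegree := by
  rcases eq_or_ne q 0 with rfl | hq
  · simp
  · rw [totalDegree_mul_of_isDomain hr hq]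
    exact Nat.le_add_left _ _

lemma prime_of_totalDegree_eq_one {K : Type*} [Field K] {p : MvPolynomial σ K}
    (hp : p.totalDegree = 1) : Prime p := by
  refine (irreducible_of_totalDegree_eq_one hp fun x hx ↦ isUnit_iff_ne_zero.2 ?_).prime
  rintro rfl
  have hp0 : p = 0 := ext _ _ fun m ↦ by simpa using hx m
  simp [hp0] at hp

end Degree

lemma exists_factor_of_mulVec_eq_zero_of_col_eq_C_mul {σ R : Type*} [CommRing R] [IsDomain R]
    [UniqueFactorizationMonoid R] {n d : ℕ}
    {h : Fin (n + 2) → MvPolynomial σ R}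
    {M : Matrix (Fin (n + 1)) (Fin (n + 2)) (MvPolynomial σ R)}
    (hdeg : ∀ i l, (M i l).totalDegree ≤ d) (hM : LinearIndependent (MvPolynomial σ R) M.row)
    (hMh : M.mulVec h = 0) {k : MvPolynomial σ R} {v : Fin (n + 1) → R} {j : Fin (n + 2)}
    (hcol : ∀ i, M i j = C (v i) * k) (hj : h j ≠ 0) :
    ∃ (g : MvPolynomial σ R) (q : Fin (n + 1) → MvPolynomial σ R), g ∣ k * h j ∧
      (∀ i, h (j.succAbove i) = g * q i) ∧ ∀ i, (q i).totalDegree ≤ n * d := by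
  let A := M.submatrix id j.succAbove
  let V : Fin (n + 1) → MvPolynomial σ R := fun i ↦ C (v i)
  have hdet : A.det ≠ 0 := det_submatrix_succAbove_ne_zero hM hMh hj
  have hAh : A.mulVec (h ∘ j.succAbove) = (-(k * h j)) • V := by
    ext1 i
    have hrow := congrFun hMh i
    simp only [Matrix.mulVec, dotProduct, Fin.sum_univ_succAbove _ j, hcol,
      Pi.zero_apply] at hrow
    simp only [Matrix.mulVec, dotProduct, A, V, Matrix.submatrix_apply, id, Function.comp_apply,
      Pi.smul_apply, smul_eq_mul]
    linear_combination hrow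
  have hcramer : A.det • (h ∘ j.succAbove) = (-(k * h j)) • A.cramer V := by
    rw [← map_smul, ← hAh, Matrix.cramer_eq_adjugate_mulVec, Matrix.mulVec_mulVec,
      Matrix.adjugate_mul, Matrix.smul_mulVec, Matrix.one_mulVec]
  obtain ⟨g, r, q, hg, hr, hq, hm⟩ :=
    exists_eq_mul_and_eq_mul_of_mul_eq_mul hdet (congrFun hcramer)
  refine ⟨g, q, dvd_neg.1 hg, hq, fun i ↦ ?_⟩
  calc (q i).totalDegree ≤ (r * q i).totalDegree := totalDegree_le_mul_left hr
    _ = (A.cramer V i).totalDegree := by rw [hm]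
    _ ≤ n * d := totalDegree_cramer_C_le (fun _ _ ↦ hdeg _ _) v i

section Dimension

/-- The space of polynomials of total degree strictly less than `e`, in terms of which dimensions
are counted. With the strict bound `e = n + 1` gives `Π_n`, and `e = 0` gives the zero space, which
plays the role of `Π_{-1}`. -/
def totalDegreeLT (σ R : Type*) [CommSemiring R] (e : ℕ) : Submodule R (MvPolynomial σ R) :=
  restrictSupport R {m | m.degree < e}

lemma mem_totalDegreeLT {σ R : Type*} [CommSemiring R] {e : ℕ} {p : MvPolynomial σ R} :
    p ∈ totalDegreeLT σ R e ↔ (p ≠ 0 → p.totalDegree < e) := by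
  rcases eq_or_ne p 0 with rfl | hp
  · simp
  obtain ⟨m, hm⟩ := support_nonempty.2 hp
  rw [totalDegreeLT, mem_restrictSupport_iff]
  refine ⟨fun h _ ↦ ?_, fun h l hl ↦ (le_totalDegree hl).trans_lt (h hp)⟩
  exact (Finset.sup_lt_iff ((Nat.zero_le _).trans_lt (h hm))).2 fun l hl ↦ h hl

lemma mem_PiLE {n : ℕ} {p : BPoly} : p ∈ PiLE n ↔ p.totalDegree ≤ n :=
  mem_restrictTotalDegree _ _ _

lemma PiLE_eq_totalDegreeLT (n : ℕ) : PiLE n = totalDegreeLT (Fin 2) ℝ (n + 1) := by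
  ext p
  rw [mem_totalDegreeLT, mem_PiLE, Nat.lt_succ_iff]
  rcases eq_or_ne p 0 with rfl | hp <;> simp [*]

instance finite_totalDegreeLT {σ R : Type*} [Finite σ] [CommSemiring R] (e : ℕ) :
    Module.Finite R (totalDegreeLT σ R e) :=
  have : Finite {m : σ →₀ ℕ | m.degree < e} := Finsupp.finite_of_degree_lt e
  .of_basis (basisRestrictSupport R _)

lemma ncard_setOf_degree_eq (e : ℕ) : {m : Fin 2 →₀ ℕ | m.degree = e}.ncard = e + 1 := by
  have : {m : Fin 2 →₀ ℕ | m.degree = e} =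
      (finsuppAntidiag univ e : Finset (Fin 2 →₀ ℕ)) := by
    ext m
    simp [mem_finsuppAntidiag, Finsupp.degree_eq_sum]
  rw [this, Set.ncard_coe_finset, card_finsuppAntidiag_nat_eq_choose]
  simp [add_comm]

variable {K : Type*} [Field K]

lemma finrank_totalDegreeLT_succ (e : ℕ) :
    finrank K (totalDegreeLT (Fin 2) K (e + 1)) =
      finrank K (totalDegreeLT (Fin 2) K e) + (e + 1) := by
  have hfinrank (e : ℕ) : finrank K (totalDegreeLT (Fin 2) K e) =
      {m : Fin 2 →₀ ℕ | m.degree < e}.ncard :=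
    finrank_eq_nat_card_basis (basisRestrictSupport K _)
  have hsplit : {m : Fin 2 →₀ ℕ | m.degree < e + 1} = {m | m.degree < e} ∪ {m | m.degree = e} :=
    Set.ext fun m ↦ Nat.lt_succ_iff_lt_or_eq
  have hdisj : Disjoint {m : Fin 2 →₀ ℕ | m.degree < e} {m | m.degree = e} :=
    Set.disjoint_left.2 fun m hlt heq ↦ hlt.ne heq
  rw [hfinrank, hfinrank, hsplit, Set.ncard_union_eq hdisj (Finsupp.finite_of_degree_lt e)
    (Finsupp.finite_of_degree_eq e), ncard_setOf_degree_eq]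

lemma finrank_le_of_forall_totalDegree_eq {d : ℕ} {W : Submodule K (MvPolynomial (Fin 2) K)}
    (hW : ∀ p ∈ W, p ≠ 0 → p.totalDegree = d) : finrank K W ≤ d + 1 := by
  have hle : W ≤ totalDegreeLT (Fin 2) K (d + 1) := fun p hp ↦
    mem_totalDegreeLT.2 fun hp0 ↦ (hW p hp hp0).trans_lt d.lt_succ_self
  have hlt : totalDegreeLT (Fin 2) K d ≤ totalDegreeLT (Fin 2) K (d + 1) := fun p hp ↦
    mem_totalDegreeLT.2 fun hp0 ↦ (mem_totalDegreeLT.1 hp hp0).trans d.lt_succ_self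
  have hdisj : Disjoint W (totalDegreeLT (Fin 2) K d) := Submodule.disjoint_def.2 fun p hp hpd ↦
    by_contra fun hp0 ↦ (mem_totalDegreeLT.1 hpd hp0).ne (hW p hp hp0)
  have : Module.Finite K W := .of_injective _ (Submodule.inclusion_injective hle)
  have hsup := Submodule.finrank_sup_add_finrank_inf_eq W (totalDegreeLT (Fin 2) K d)
  rw [hdisj.eq_bot, finrank_bot] at hsup
  have := Submodule.finrank_mono (sup_le hle hlt)
  rw [finrank_totalDegreeLT_succ] at this
  omega

end Dimension

section Evaluation

variable {σ K : Type*} [Field K]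

lemma finrank_le_card_of_forall_eval_eq_zero {W : Submodule K (MvPolynomial σ K)}
    {S : Finset (σ → K)} (hW : ∀ p ∈ W, (∀ y ∈ S, eval y p = 0) → p = 0) :
    finrank K W ≤ #S := by
  let restrict : W →ₗ[K] S → K := LinearMap.funLeft K K (↑) ∘ₗ evalₗ K σ ∘ₗ W.subtype
  have hinj : Function.Injective restrict := (injective_iff_map_eq_zero _).2 fun p hp ↦
    Subtype.ext (hW p p.2 fun y hy ↦ congrFun hp ⟨y, hy⟩)
  simpa using LinearMap.finrank_le_finrank_of_injective hinj

lemma card_le_finrank_of_forall_exists_eval_eq {W : Submodule K (MvPolynomial σ K)}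
    [Module.Finite K W] {S : Finset (σ → K)}
    (hW : ∀ f : (σ → K) → K, ∃ p ∈ W, ∀ y ∈ S, eval y p = f y) :
    #S ≤ finrank K W := by
  classical
  let restrict : W →ₗ[K] S → K := LinearMap.funLeft K K (↑) ∘ₗ evalₗ K σ ∘ₗ W.subtype
  have hsurj : Function.Surjective restrict := fun f ↦ by
    obtain ⟨p, hp, hpf⟩ := hW fun y ↦ if hy : y ∈ S then f ⟨y, hy⟩ else 0
    exact ⟨⟨p, hp⟩, funext fun y ↦ (hpf y y.2).trans (dif_pos y.2)⟩
  simpa using LinearMap.finrank_le_finrank_of_surjective hsurj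

end Evaluation

lemma IsLinSyz.exists_factor_of_col_eq_C_mul {n : ℕ} {h : Fin (n + 2) → BPoly}
    {M : Matrix (Fin (n + 1)) (Fin (n + 2)) BPoly} (hM : IsLinSyz n h M)
    (hrk : ratRank M = n + 1) {k : BPoly} {v : Fin (n + 1) → ℝ} {j : Fin (n + 2)}
    (hcol : ∀ i, M i j = C (v i) * k) (hj : h j ≠ 0) :
    ∃ (g : BPoly) (q : Fin (n + 1) → BPoly), g ∣ k * h j ∧
      (∀ i, h (j.succAbove i) = g * q i) ∧ ∀ i, (q i).totalDegree ≤ n := by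
  have hdeg (i l) : (M i l).totalDegree ≤ 1 := mem_PiLE.1 (hM.1 i l)
  have hrow : LinearIndependent BPoly M.row :=
    linearIndependent_row_of_rank_map_eq_card (hrk.trans (Fintype.card_fin _).symm)
  simpa only [mul_one] using
    exists_factor_of_mulVec_eq_zero_of_col_eq_C_mul hdeg hrow (funext hM.2) hcol hj

namespace Poised

variable {n : ℕ} {Y : Finset Pt}

lemma eq_zero_of_totalDegree_le (hY : Poised n Y) {p : BPoly} (hp : p.totalDegree ≤ n)
    (hpY : ∀ y ∈ Y, eval y p = 0) : p = 0 :=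
  (hY 0).unique ⟨mem_PiLE.2 hp, hpY⟩ ⟨zero_mem _, fun _ _ ↦ map_zero _⟩

lemma totalDegree_eq_succ (hY : Poised n Y) {p : BPoly}
    (hp : p ∈ PiLE (n + 1) ⊓ vSub (Y : Set Pt)) (hp0 : p ≠ 0) : p.totalDegree = n + 1 :=
  (mem_PiLE.1 hp.1).antisymm <| Nat.succ_le_of_lt <| lt_of_not_ge fun hle ↦
    hp0 (hY.eq_zero_of_totalDegree_le hle hp.2)

lemma card_add_totalDegree_le (hY : Poised n Y) {ι : Type*} [Fintype ι] [Nonempty ι]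
    {h : ι → BPoly} (hind : LinearIndependent ℝ h)
    (hmem : ∀ i, h i ∈ PiLE (n + 1) ⊓ vSub (Y : Set Pt)) {g : BPoly} (hg : ∀ i, g ∣ h i) :
    Fintype.card ι + g.totalDegree ≤ n + 2 := by
  choose q hq using hg
  obtain rfl : h = fun i ↦ g * q i := funext hq
  have hqind : LinearIndependent ℝ q := .of_comp (LinearMap.mulLeft ℝ g) hind
  let W := Submodule.span ℝ (Set.range q)
  have hgW : W ≤ (PiLE (n + 1) ⊓ vSub (Y : Set Pt)).comap (LinearMap.mulLeft ℝ g) :=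
    Submodule.span_le.2 (Set.range_subset_iff.2 hmem)
  obtain ⟨i⟩ := ‹Nonempty ι›
  have hg0 : g ≠ 0 := left_ne_zero_of_mul (hind.ne_zero i)
  have hdeg (p) (hp : p ∈ W) (hp0 : p ≠ 0) : g.totalDegree + p.totalDegree = n + 1 := by
    rw [← totalDegree_mul_of_isDomain hg0 hp0]
    exact hY.totalDegree_eq_succ (hgW hp) (mul_ne_zero hg0 hp0)
  have hfinrank : finrank ℝ W ≤ n + 1 - g.totalDegree + 1 :=
    finrank_le_of_forall_totalDegree_eq fun p hp hp0 ↦ by have := hdeg p hp hp0; omega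
  rw [finrank_span_eq_card hqind] at hfinrank
  have := hdeg (q i) (Submodule.subset_span ⟨i, rfl⟩) (hqind.ne_zero i)
  omega

lemma not_forall_dvd_of_totalDegree_ne_zero (hY : Poised n Y) {h : Fin (n + 2) → BPoly}
    (hind : LinearIndependent ℝ h) (hmem : ∀ i, h i ∈ PiLE (n + 1) ⊓ vSub (Y : Set Pt))
    {g : BPoly} (hg : g.totalDegree ≠ 0) : ¬ ∀ i, g ∣ h i := fun hdvd ↦ by
  have := hY.card_add_totalDegree_le hind hmem hdvd
  rw [Fintype.card_fin] at this
  omega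

lemma totalDegree_eq_one_of_eq_mul (hY : Poised n Y) {f q : Fin (n + 1) → BPoly}
    (hind : LinearIndependent ℝ f) (hmem : ∀ i, f i ∈ PiLE (n + 1) ⊓ vSub (Y : Set Pt))
    {g : BPoly} (hfq : ∀ i, f i = g * q i) (hqn : ∀ i, (q i).totalDegree ≤ n) :
    g.totalDegree = 1 := by
  have hle := hY.card_add_totalDegree_le hind hmem fun i ↦ Dvd.intro _ (hfq i).symm
  have hge : n + 1 ≤ g.totalDegree + n := calc
    n + 1 = (g * q 0).totalDegree := by rw [← hfq, hY.totalDegree_eq_succ (hmem 0) (hind.ne_zero 0)]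
    _ ≤ g.totalDegree + (q 0).totalDegree := totalDegree_mul _ _
    _ ≤ g.totalDegree + n := by gcongr; exact hqn 0
  rw [Fintype.card_fin] at hle
  omega

lemma card_filter_add_finrank_le (hY : Poised n Y) {k : BPoly} (hk : k ≠ 0) :
    #{y ∈ Y | eval y k = 0} +
        finrank ℝ (totalDegreeLT (Fin 2) ℝ (n + 1 - k.totalDegree)) ≤
      finrank ℝ (PiLE n) := by
  have hoff : finrank ℝ (totalDegreeLT (Fin 2) ℝ (n + 1 - k.totalDegree)) ≤
      #{y ∈ Y | eval y k ≠ 0} := by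
    refine finrank_le_card_of_forall_eval_eq_zero fun p hp hpY ↦ by_contra fun hp0 ↦ ?_
    have hdeg := mem_totalDegreeLT.1 hp hp0
    refine mul_ne_zero hk hp0 (hY.eq_zero_of_totalDegree_le ?_ fun y hy ↦ ?_)
    · rw [totalDegree_mul_of_isDomain hk hp0]
      omega
    · rw [map_mul, mul_eq_zero, or_iff_not_imp_left]
      exact fun hky ↦ hpY y (mem_filter.2 ⟨hy, hky⟩)
  have : Module.Finite ℝ (PiLE n) := by rw [PiLE_eq_totalDegreeLT]; infer_instance
  have hY_card : #Y ≤ finrank ℝ (PiLE n) :=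
    card_le_finrank_of_forall_exists_eval_eq fun f ↦ (hY f).exists
  calc _ ≤ #{y ∈ Y | eval y k = 0} + #{y ∈ Y | eval y k ≠ 0} := by gcongr
    _ = #Y := card_filter_add_card_filter_not _
    _ ≤ _ := hY_card

lemma card_filter_le_of_totalDegree_eq_one (hY : Poised n Y) {k : BPoly}
    (hk : k.totalDegree = 1) : #{y ∈ Y | eval y k = 0} ≤ n + 1 := by
  have hk0 : k ≠ 0 := by rintro rfl; simp at hk
  have := hY.card_filter_add_finrank_le hk0
  rw [hk, PiLE_eq_totalDegreeLT, finrank_totalDegreeLT_succ, Nat.add_sub_cancel] at this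
  omega

lemma card_le_card_filter (hY : Poised n Y) {ι : Type*} [Fintype ι] {k : BPoly} {q : ι → BPoly}
    (hq : LinearIndependent ℝ q) (hqn : ∀ i, q i ∈ PiLE n)
    (hkq : ∀ i, k * q i ∈ vSub (Y : Set Pt)) :
    Fintype.card ι ≤ #{y ∈ Y | eval y k = 0} := by
  let W := Submodule.span ℝ (Set.range q)
  have hWn : W ≤ PiLE n := Submodule.span_le.2 (Set.range_subset_iff.2 hqn)
  have hkW : W ≤ (vSub (Y : Set Pt)).comap (LinearMap.mulLeft ℝ k) :=
    Submodule.span_le.2 (Set.range_subset_iff.2 hkq)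
  rw [← finrank_span_eq_card hq]
  refine finrank_le_card_of_forall_eval_eq_zero fun p hp hpK ↦
    hY.eq_zero_of_totalDegree_le (mem_PiLE.1 (hWn hp)) fun y hy ↦ ?_
  by_cases hky : eval y k = 0
  · exact hpK y (mem_filter.2 ⟨hy, hky⟩)
  · have hkp : eval y (k * p) = 0 := hkW hp y hy
    exact (mul_eq_zero.1 (map_mul (eval y) k p ▸ hkp)).resolve_left hky

end Poised

/-- If a `Π_n`-poised set `Y_n` admits linearly independent
`h_0, …, h_{n+1} ∈ Π_{n+1} ∩ I(Y_n)` with a rank-`(n+1)` linear syzygy matrix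
having a column of the form `k(x)·v` with `k` nonconstant linear, then
`K = V(k)` is a maximal line for `Y_n`: `#(K ∩ Y_n) = n+1`. -/
theorem stmt15 (n : ℕ) (Y : Finset Pt) (hY : Poised n Y)
    (h : Fin (n + 2) → BPoly)
    (hmem : ∀ i, h i ∈ PiLE (n + 1) ⊓ vSub (Y : Set Pt))
    (hind : LinearIndependent ℝ h)
    (M : Matrix (Fin (n + 1)) (Fin (n + 2)) BPoly)
    (hM : IsLinSyz n h M) (hrk : ratRank M = n + 1)
    (k : BPoly) (hk : k.totalDegree = 1)
    (v : Fin (n + 1) → ℝ) (j : Fin (n + 2))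
    (hcol : ∀ i, M i j = C (v i) * k) :
    ((Y : Set Pt) ∩ {x | eval x k = 0}).ncard = n + 1 := by
  obtain ⟨g, q, hgk, hq, hqn⟩ := hM.exists_factor_of_col_eq_C_mul hrk hcol (hind.ne_zero j)
  have hfind : LinearIndependent ℝ fun i ↦ h (j.succAbove i) :=
    hind.comp _ j.succAbove_right_injective
  have hg : g.totalDegree = 1 := hY.totalDegree_eq_one_of_eq_mul hfind (fun _ ↦ hmem _) hq hqn
  have hgj : ¬ g ∣ h j := fun hgj ↦
    hY.not_forall_dvd_of_totalDegree_ne_zero hind hmem (hg ▸ one_ne_zero)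
      ((Fin.forall_iff_succAbove j).2 ⟨hgj, fun i ↦ Dvd.intro _ (hq i).symm⟩)
  obtain ⟨s, hs⟩ := ((prime_of_totalDegree_eq_one hg).dvd_or_dvd hgk).resolve_right hgj
  have hqind : LinearIndependent ℝ q := by
    simp only [hq] at hfind
    exact hfind.of_comp (LinearMap.mulLeft ℝ g)
  have hkq (i) : k * q i ∈ vIdeal (Y : Set Pt) := by
    rw [hs, mul_right_comm, ← hq]
    exact Ideal.mul_mem_right _ _ (hmem _).2
  have hfilter : (Y : Set Pt) ∩ {x | eval x k = 0} = ({y ∈ Y | eval y k = 0} : Finset Pt) :=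
    (coe_filter _ _).symm
  rw [hfilter, Set.ncard_coe_finset]
  refine (hY.card_filter_le_of_totalDegree_eq_one hk).antisymm ?_
  simpa using hY.card_le_card_filter hqind (fun i ↦ mem_PiLE.2 (hqn i)) hkq
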